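/- Lemma (generalized Newton descent). Let a ≤ b be integers with ℓ = b − a + 1 ≥ 2, let u_a,…,u_b ∈ [−1,1], let x_j = [1, j − a + 1]ᵀ ∈ ℝ², A = Σ_{j=a}^b x_j x_jᵀ (which is invertible), and β = A^{−1} Σ_{j=a}^b u_j x_j (the least-squares coefficient). Suppose each f_j : ℝ → ℝ (j = a,…,b) is twice continuously differentiable on [−20,20] with |f_j'(z)| ≤ 1 and f_j''(z) ≤ 1 for all z ∈ [−20,20]. Define F(β') = Σ_{j=a}^b f_j(x_jᵀ β') and the Newton-type update α = β − A^{−1} ∇F(β). Then F(α) − F(β) ≤ −(1/2)·∇F(β)ᵀ A^{−1} ∇F(β) = −(1/2)‖∇F(β)‖²_{A^{−1}}. -/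

import Mathlib

/-- Covariate `x_j = [1, j - a + 1]ᵀ` for an interval starting at `a`. -/
noncomputable def xv (a j : ℕ) : Fin 2 → ℝ := ![1, (j : ℝ) - (a : ℝ) + 1]

open Set in
/-- Second-order upper bound for a function whose second derivative is at most one on an interval. -/
theorem ContDiffOn.le_add_derivWithin_mul_add_sq {f : ℝ → ℝ} {l r : ℝ} (hlr : l < r)
    (hf : ContDiffOn ℝ 2 f (Icc l r))
    (hf2 : ∀ z ∈ Icc l r, derivWithin (derivWithin f (Icc l r)) (Icc l r) z ≤ 1)
    {x y : ℝ} (hx : x ∈ Icc l r) (hy : y ∈ Icc l r) :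
    f y ≤ f x + derivWithin f (Icc l r) x * (y - x) + (y - x) ^ 2 / 2 := by
  have hU : UniqueDiffOn ℝ (Icc l r) := uniqueDiffOn_Icc hlr
  have hf' : DifferentiableOn ℝ (derivWithin f (Icc l r)) (Icc l r) :=
    (hf.derivWithin hU (m := 1) (by norm_num)).differentiableOn (by norm_num)
  have hfd : DifferentiableOn ℝ f (Icc l r) := hf.differentiableOn (by norm_num)
  set D := derivWithin f (Icc l r) with hD
  have hanti : AntitoneOn (fun z => D z - z) (Icc l r) := by
    refine antitoneOn_of_hasDerivWithinAt_nonpos (f' := fun z => derivWithin D (Icc l r) z - 1)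
      (convex_Icc l r) (hf'.continuousOn.sub continuousOn_id) (fun z hz => ?_) (fun z hz => ?_)
    · exact (((hf' z (interior_subset hz)).hasDerivWithinAt).mono interior_subset).sub
        (hasDerivWithinAt_id z _)
    · linarith [hf2 z (interior_subset hz)]
  set h : ℝ → ℝ := fun z => f z - D x * (z - x) - (z - x) ^ 2 / 2 with hh
  have hh' : ∀ z ∈ Icc l r, HasDerivWithinAt h (D z - D x - (z - x)) (Icc l r) z := by
    intro z hz
    have h1 := ((hasDerivWithinAt_id z (Icc l r)).sub_const x)
    have h2 := ((hfd z hz).hasDerivWithinAt.sub (h1.const_mul (D x))).sub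
      ((h1.pow 2).div_const 2)
    refine h2.congr_deriv ?_
    simp [hD]
  have key : h y ≤ h x := by
    rcases le_total x y with hxy | hyx
    · have hs : Icc x y ⊆ Icc l r := Icc_subset_Icc hx.1 hy.2
      refine antitoneOn_of_hasDerivWithinAt_nonpos (convex_Icc x y)
        (fun z hz => ((hh' z (hs hz)).mono hs).continuousWithinAt)
        (fun z hz => (hh' z (hs (interior_subset hz))).mono (interior_subset.trans hs))
        (fun z hz => ?_) (left_mem_Icc.2 hxy) (right_mem_Icc.2 hxy) hxy
      have hz' := interior_subset hz
      have := hanti hx (hs hz') hz'.1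
      simp only at this
      linarith
    · have hs : Icc y x ⊆ Icc l r := Icc_subset_Icc hy.1 hx.2
      refine monotoneOn_of_hasDerivWithinAt_nonneg (convex_Icc y x)
        (fun z hz => ((hh' z (hs hz)).mono hs).continuousWithinAt)
        (fun z hz => (hh' z (hs (interior_subset hz))).mono (interior_subset.trans hs))
        (fun z hz => ?_) (left_mem_Icc.2 hyx) (right_mem_Icc.2 hyx) hyx
      have hz' := interior_subset hz
      have := hanti (hs hz') hx hz'.2
      simp only at this
      linarith
  simp only [hh, sub_self] at key
  linarith

theorem sum_Icc_sub_add_one (a m : ℕ) :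
    ∑ j ∈ Finset.Icc a (a + m), ((j : ℝ) - a + 1) = (m + 1) * (m + 2) / 2 := by
  induction m with
  | zero => simp
  | succ m ih =>
    rw [← add_assoc, Finset.sum_Icc_succ_top (by omega), ih]
    push_cast
    ring

theorem sum_Icc_sub_add_one_sq (a m : ℕ) :
    ∑ j ∈ Finset.Icc a (a + m), ((j : ℝ) - a + 1) ^ 2 =
      ((m : ℝ) + 1) * (m + 2) * (2 * m + 3) / 6 := by
  induction m with
  | zero => norm_num
  | succ m ih =>
    rw [← add_assoc, Finset.sum_Icc_succ_top (by omega), ih]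
    push_cast
    ring

/-- The Gram matrix `∑ x_j x_jᵀ` of the covariates over `[a, a + m]`, in closed form. -/
theorem sum_vecMulVec_xv (a m : ℕ) :
    ∑ j ∈ Finset.Icc a (a + m), Matrix.vecMulVec (xv a j) (xv a j) =
      !![(m + 1 : ℝ), (m + 1) * (m + 2) / 2;
        (m + 1) * (m + 2) / 2, (m + 1) * (m + 2) * (2 * m + 3) / 6] := by
  ext i k
  rw [Matrix.sum_apply]
  fin_cases i <;> fin_cases k <;>
    simp [Matrix.vecMulVec_apply, xv,
      sum_Icc_sub_add_one, ← sq, sum_Icc_sub_add_one_sq]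
  rw [add_assoc, Nat.add_sub_cancel_left]
  simp

theorem isUnit_det_sum_vecMulVec_xv (a : ℕ) {m : ℕ} (hm : 1 ≤ m) :
    IsUnit (∑ j ∈ Finset.Icc a (a + m), Matrix.vecMulVec (xv a j) (xv a j)).det := by
  rw [sum_vecMulVec_xv, Matrix.det_fin_two_of, isUnit_iff_ne_zero]
  have hm' : (1 : ℝ) ≤ m := by exact_mod_cast hm
  have : (0 : ℝ) < (m + 1) ^ 2 * (m + 2) * m / 12 := by positivity
  refine ne_of_gt (this.trans_eq ?_)
  ring

/-- The quadratic form of the Gram matrix is the sum of squared predictions. -/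
theorem sum_sq_prediction (s : Finset ℕ) (a : ℕ) (v : Fin 2 → ℝ) :
    ∑ j ∈ s, (∑ i, v i * xv a j i) ^ 2 =
      ∑ i, v i * ((∑ j ∈ s, Matrix.vecMulVec (xv a j) (xv a j)).mulVec v) i := by
  simp only [Matrix.sum_mulVec, Finset.sum_apply, Finset.mul_sum]
  rw [Finset.sum_comm]
  refine Finset.sum_congr rfl fun j _ => ?_
  simp [Fin.sum_univ_two, Matrix.mulVec, dotProduct, Matrix.vecMulVec_apply]
  ring

theorem sum_mul_sum_smul_xv (s : Finset ℕ) (a : ℕ) (w : ℕ → ℝ) (v : Fin 2 → ℝ) :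
    ∑ i, v i * (∑ j ∈ s, w j • xv a j) i = ∑ j ∈ s, w j * ∑ i, v i * xv a j i := by
  simp only [Finset.sum_apply, Finset.mul_sum, Pi.smul_apply, smul_eq_mul]
  rw [Finset.sum_comm]
  exact Finset.sum_congr rfl fun j _ => Finset.sum_congr rfl fun i _ => by ring

/-- Least-squares predictions for responses in `[-1, 1]` are bounded by an absolute constant. -/
theorem abs_prediction_le (a : ℕ) {m : ℕ} (hm : 1 ≤ m) {w : ℕ → ℝ}
    (hw : ∀ j ∈ Finset.Icc a (a + m), |w j| ≤ 1) {v : Fin 2 → ℝ}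
    (hv : (∑ j ∈ Finset.Icc a (a + m), Matrix.vecMulVec (xv a j) (xv a j)).mulVec v =
      ∑ j ∈ Finset.Icc a (a + m), w j • xv a j)
    {j : ℕ} (hj : j ∈ Finset.Icc a (a + m)) : |∑ i, v i * xv a j i| ≤ 10 := by
  have hm' : (1 : ℝ) ≤ m := by exact_mod_cast hm
  have hsq := sum_sq_prediction (Finset.Icc a (a + m)) a v
  have hle : ∑ k ∈ Finset.Icc a (a + m), (∑ i, v i * xv a k i) ^ 2 ≤ m + 1 := by
    have h1 : ∑ k ∈ Finset.Icc a (a + m), (∑ i, v i * xv a k i) ^ 2 =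
        ∑ k ∈ Finset.Icc a (a + m), w k * ∑ i, v i * xv a k i := by
      rw [hsq, hv, sum_mul_sum_smul_xv]
    have h2 : ∑ k ∈ Finset.Icc a (a + m), w k * ∑ i, v i * xv a k i ≤
        ∑ k ∈ Finset.Icc a (a + m), (1 + (∑ i, v i * xv a k i) ^ 2) / 2 := by
      refine Finset.sum_le_sum fun k hk => ?_
      have := (sq_le_one_iff_abs_le_one (w k)).2 (hw k hk)
      nlinarith [sq_nonneg (w k - ∑ i, v i * xv a k i)]
    have h3 : ∑ _k ∈ Finset.Icc a (a + m), (1 : ℝ) = m + 1 := by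
      have : a + m + 1 - a = m + 1 := by omega
      simp [this]
    rw [← Finset.sum_div, Finset.sum_add_distrib, h3] at h2
    linarith
  rw [hsq, sum_vecMulVec_xv] at hle
  simp only [Fin.sum_univ_two, Matrix.mulVec, dotProduct, Matrix.of_apply, Matrix.cons_val_zero,
    Matrix.cons_val_one] at hle
  rw [Finset.mem_Icc] at hj
  have hj1 : (a : ℝ) ≤ j := by exact_mod_cast hj.1
  have hj2 : (j : ℝ) ≤ a + m := by exact_mod_cast hj.2
  have hp : ∑ i, v i * xv a j i = (v 0 + v 1 * ((m + 2) / 2)) + v 1 * ((j : ℝ) - a - m / 2) := by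
    simp [Fin.sum_univ_two, xv]
    ring
  -- Variance decomposition around the midpoint of the interval.
  have hcen : (v 0 + v 1 * ((m + 2) / 2)) ^ 2 + v 1 ^ 2 * (m * (m + 2) / 12) ≤ (1 : ℝ) := by
    refine le_of_mul_le_mul_left (a := (m + 1 : ℝ)) ?_ (by positivity)
    linarith
  have hdev : ((j : ℝ) - a - m / 2) ^ 2 ≤ m ^ 2 / 4 := by
    nlinarith [mul_nonneg (sub_nonneg.2 hj1) (sub_nonneg.2 hj2)]
  rw [hp]
  refine abs_le_of_sq_le_sq ?_ (by norm_num)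
  set c := v 0 + v 1 * (((m : ℝ) + 2) / 2)
  have h4 : (v 1 * ((j : ℝ) - a - m / 2)) ^ 2 ≤ v 1 ^ 2 * (m ^ 2 / 4) := by
    rw [mul_pow]
    exact mul_le_mul_of_nonneg_left hdev (sq_nonneg _)
  have h5 : 0 ≤ v 1 ^ 2 * (m : ℝ) := by positivity
  nlinarith [sq_nonneg (c - v 1 * ((j : ℝ) - a - m / 2)), sq_nonneg c]

/-!
Lemma (generalized Newton descent).  With `ℓ = b - a + 1 ≥ 2`, `u_j ∈ [-1,1]`,
`A = Σ_j x_j x_jᵀ`, `β = A⁻¹ Σ_j u_j x_j` the least-squares coefficient, `f_j` twice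
continuously differentiable on `[-20, 20]` with `|f_j'| ≤ 1` and `f_j'' ≤ 1` there,
`F(β') = Σ_j f_j(x_jᵀ β')`, and the Newton-type update `α = β - A⁻¹ ∇F(β)`, we have
`F(α) - F(β) ≤ -(1/2) ∇F(β)ᵀ A⁻¹ ∇F(β)`.
-/
theorem generalized_newton_descent (a b : ℕ) (hab : a ≤ b) (hlen : 2 ≤ b - a + 1)
    (u : ℕ → ℝ) (hu : ∀ j ∈ Finset.Icc a b, u j ∈ Set.Icc (-1 : ℝ) 1)
    (f : ℕ → ℝ → ℝ)
    (hf : ∀ j ∈ Finset.Icc a b, ContDiffOn ℝ 2 (f j) (Set.Icc (-20 : ℝ) 20))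
    (hf1 : ∀ j ∈ Finset.Icc a b, ∀ z ∈ Set.Icc (-20 : ℝ) 20,
      |derivWithin (f j) (Set.Icc (-20 : ℝ) 20) z| ≤ 1)
    (hf2 : ∀ j ∈ Finset.Icc a b, ∀ z ∈ Set.Icc (-20 : ℝ) 20,
      derivWithin (derivWithin (f j) (Set.Icc (-20 : ℝ) 20)) (Set.Icc (-20 : ℝ) 20) z ≤ 1)
    (A : Matrix (Fin 2) (Fin 2) ℝ)
    (hA : A = ∑ j ∈ Finset.Icc a b, Matrix.vecMulVec (xv a j) (xv a j))
    (β g α : Fin 2 → ℝ)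
    (hβ : β = A⁻¹.mulVec (∑ j ∈ Finset.Icc a b, u j • xv a j))
    (hg : g = ∑ j ∈ Finset.Icc a b,
      derivWithin (f j) (Set.Icc (-20 : ℝ) 20) (∑ i, β i * xv a j i) • xv a j)
    (hα : α = β - A⁻¹.mulVec g) :
    (∑ j ∈ Finset.Icc a b, f j (∑ i, α i * xv a j i)) -
        (∑ j ∈ Finset.Icc a b, f j (∑ i, β i * xv a j i)) ≤
      -(1 / 2) * ∑ i, g i * A⁻¹.mulVec g i := by
  obtain ⟨m, rfl⟩ := Nat.exists_eq_add_of_le hab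
  have hm : 1 ≤ m := by omega
  have hdet : IsUnit A.det := hA ▸ isUnit_det_sum_vecMulVec_xv a hm
  have hAinv (y : Fin 2 → ℝ) : A.mulVec (A⁻¹.mulVec y) = y := by
    rw [Matrix.mulVec_mulVec, Matrix.mul_nonsing_inv _ hdet, Matrix.one_mulVec]
  set s := Finset.Icc a (a + m)
  have hβb : ∀ j ∈ s, |∑ i, β i * xv a j i| ≤ 10 := fun j hj =>
    abs_prediction_le a hm (fun k hk => abs_le.2 (hu k hk)) (by rw [← hA, hβ, hAinv]) hj
  have hβI : ∀ j ∈ s, ∑ i, β i * xv a j i ∈ Set.Icc (-20 : ℝ) 20 := fun j hj => by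
    have := abs_le.1 (hβb j hj)
    constructor <;> linarith
  set v := A⁻¹.mulVec g
  have hAv : A.mulVec v = g := hAinv g
  have hvb : ∀ j ∈ s, |∑ i, v i * xv a j i| ≤ 10 := fun j hj =>
    abs_prediction_le a hm (fun k hk => hf1 k hk _ (hβI k hk)) (by rw [← hA, hAv, hg]) hj
  have hαp (j : ℕ) : ∑ i, α i * xv a j i = ∑ i, β i * xv a j i - ∑ i, v i * xv a j i := by
    rw [← Finset.sum_sub_distrib]
    exact Finset.sum_congr rfl fun i _ => by rw [hα, Pi.sub_apply, sub_mul]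
  have hαI : ∀ j ∈ s, ∑ i, α i * xv a j i ∈ Set.Icc (-20 : ℝ) 20 := fun j hj => by
    have h1 := abs_le.1 (hβb j hj)
    have h2 := abs_le.1 (hvb j hj)
    rw [hαp]
    constructor <;> linarith
  have hquad : ∑ j ∈ s, (∑ i, v i * xv a j i) ^ 2 = ∑ i, g i * v i := by
    rw [sum_sq_prediction, ← hA, hAv]
    exact Finset.sum_congr rfl fun i _ => mul_comm _ _
  have hlin : ∑ j ∈ s, derivWithin (f j) (Set.Icc (-20 : ℝ) 20) (∑ i, β i * xv a j i) *
      ∑ i, v i * xv a j i = ∑ i, g i * v i := by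
    rw [← sum_mul_sum_smul_xv, ← hg]
    exact Finset.sum_congr rfl fun i _ => mul_comm _ _
  calc
    _ = ∑ j ∈ s, (f j (∑ i, α i * xv a j i) - f j (∑ i, β i * xv a j i)) :=
      (Finset.sum_sub_distrib _ _).symm
    _ ≤ ∑ j ∈ s, ((∑ i, v i * xv a j i) ^ 2 / 2 -
        derivWithin (f j) (Set.Icc (-20 : ℝ) 20) (∑ i, β i * xv a j i) *
          ∑ i, v i * xv a j i) := by
      refine Finset.sum_le_sum fun j hj => ?_
      have := (hf j hj).le_add_derivWithin_mul_add_sq (by norm_num) (hf2 j hj) (hβI j hj) (hαI j hj)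
      have hd : ∑ i, α i * xv a j i - ∑ i, β i * xv a j i = -∑ i, v i * xv a j i := by
        rw [hαp]
        ring
      rw [hd, neg_sq] at this
      linarith
    _ = -(1 / 2) * ∑ i, g i * v i := by
      rw [Finset.sum_sub_distrib, ← Finset.sum_div, hquad, hlin]
      ring
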